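/- arXiv:math/0610384 — 2 statements merged into one kernel-verified Lean document; each statement's English description precedes it below -/
import Mathlib

section
/- Let s ≥ 3 and k ≥ 1 be integers and let H be a finite simple graph in which every vertex has degree at least 3 and at most s. Let H_k be the graph obtained from H by subdividing every edge with exactly k new vertices. Then λ_k(H_k) = τ_k(H_k) = v(H). -/
/-- `H` is a path with `k` edges (a "k-edge path"), as a subgraph of `G`. -/
def SimpleGraph.Subgraph.IsKEdgePath {V : Type*} {G : SimpleGraph V}
    (H : G.Subgraph) (k : ℕ) : Prop :=
  ∃ (u v : V) (w : G.Walk u v), w.IsPath ∧ w.length = k ∧ H = w.toSubgraph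

/-- `H` is a tree with `k` edges (a "k-edge tree"), as a subgraph of `G`. -/
def SimpleGraph.Subgraph.IsKEdgeTree {V : Type*} {G : SimpleGraph V}
    (H : G.Subgraph) (k : ℕ) : Prop :=
  H.coe.IsTree ∧ H.edgeSet.ncard = k

/-- The maximum number of pairwise vertex-disjoint `k`-edge paths in `G`. -/
noncomputable def SimpleGraph.lambdaK {V : Type*} (G : SimpleGraph V) (k : ℕ) : ℕ :=
  sSup {n | ∃ P : Finset G.Subgraph,
    (∀ H ∈ P, H.IsKEdgePath k) ∧
    (P : Set G.Subgraph).Pairwise (fun H H' => Disjoint H.verts H'.verts) ∧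
    P.card = n}

/-- The maximum number of pairwise vertex-disjoint `k`-edge trees in `G`. -/
noncomputable def SimpleGraph.tauK {V : Type*} (G : SimpleGraph V) (k : ℕ) : ℕ :=
  sSup {n | ∃ P : Finset G.Subgraph,
    (∀ H ∈ P, H.IsKEdgeTree k) ∧
    (P : Set G.Subgraph).Pairwise (fun H H' => Disjoint H.verts H'.verts) ∧
    P.card = n}

/-- `G'` is obtained from `G` by subdividing each edge `e` of `G` with exactly `f e`
new vertices; `ι` is the embedding of the original (branch) vertices into `G'`.
Each edge `uv` of `G` is replaced by a path `P h` of length `f s(u,v) + 1` from `ι u`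
to `ι v`, whose internal vertices are new, these paths are internally disjoint,
they cover all vertices of `G'`, and their edges are exactly the edges of `G'`. -/
def SimpleGraph.IsSubdivision {V V' : Type*} (G : SimpleGraph V) (G' : SimpleGraph V')
    (ι : V → V') (f : Sym2 V → ℕ) : Prop :=
  Function.Injective ι ∧
  ∃ P : ∀ ⦃u v : V⦄, G.Adj u v → G'.Walk (ι u) (ι v),
    (∀ ⦃u v⦄ (h : G.Adj u v), (P h).IsPath) ∧
    (∀ ⦃u v⦄ (h : G.Adj u v), (P h).length = f s(u, v) + 1) ∧
    (∀ ⦃u v⦄ (h : G.Adj u v), P h.symm = (P h).reverse) ∧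
    (∀ ⦃u v⦄ (h : G.Adj u v), ∀ z ∈ (P h).support, z ∈ Set.range ι → z = ι u ∨ z = ι v) ∧
    (∀ x : V', x ∈ Set.range ι ∨ ∃ (u v : V) (h : G.Adj u v), x ∈ (P h).support) ∧
    (∀ ⦃u v u' v' : V⦄ (h : G.Adj u v) (h' : G.Adj u' v'), s(u, v) ≠ s(u', v') →
      ∀ z : V', z ∈ (P h).support → z ∈ (P h').support → z ∈ Set.range ι) ∧
    (∀ e : Sym2 V', e ∈ G'.edgeSet ↔ ∃ (u v : V) (h : G.Adj u v), e ∈ (P h).edges)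

open SimpleGraph in
theorem aux_tail {V : Type*} {G : SimpleGraph V} {a b : V} (p : G.Walk a b) (k : ℕ)
    (hp : p.IsPath) (hl : p.length = k + 1) :
    ∃ (x : V) (q : G.Walk x b), q.IsPath ∧ q.length = k ∧ a ∉ q.support ∧
      ∀ z ∈ q.support, z ∈ p.support := by
  cases p with
  | nil => simp at hl
  | cons h q =>
    rw [Walk.cons_isPath_iff] at hp
    refine ⟨_, q, hp.1, by simpa using hl, hp.2, ?_⟩
    intro z hz
    simp [hz]

open SimpleGraph in
theorem aux_coe_edges {V : Type*} {G : SimpleGraph V} (T : G.Subgraph) :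
    Nat.card T.coe.edgeSet = T.edgeSet.ncard := by
  rw [← Subgraph.image_coe_edgeSet_coe, Set.ncard_image_of_injective, Nat.card_coe_set_eq]
  exact Sym2.map.injective Subtype.val_injective

open SimpleGraph in
theorem aux_path_tree {V : Type*} [Finite V] {G : SimpleGraph V} (T : G.Subgraph) (k : ℕ)
    (h : T.IsKEdgePath k) : T.IsKEdgeTree k := by
  classical
  obtain ⟨u, v, w, hw, hl, rfl⟩ := h
  have he : w.toSubgraph.edgeSet.ncard = k := by
    have : w.toSubgraph.edgeSet = (w.edges.toFinset : Set (Sym2 V)) := by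
      ext e; simp
    rw [this, Set.ncard_coe_finset, List.toFinset_card_of_nodup hw.isTrail.edges_nodup]
    simpa using hl
  have hv : Nat.card w.toSubgraph.verts = k + 1 := by
    have : w.toSubgraph.verts = (w.support.toFinset : Set V) := by
      ext e; simp
    rw [Nat.card_coe_set_eq, this, Set.ncard_coe_finset,
      List.toFinset_card_of_nodup hw.support_nodup]
    simp [hl]
  refine ⟨?_, he⟩
  rw [isTree_iff_connected_and_card]
  refine ⟨w.toSubgraph_connected, ?_⟩
  rw [aux_coe_edges, he, hv]

open SimpleGraph in
theorem aux_tree_branch {V V' : Type} [Finite V'] (k : ℕ)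
    (H : SimpleGraph V) (Hk : SimpleGraph V') (ι : V → V')
    (hsub : H.IsSubdivision Hk ι (fun _ => k)) (T : Hk.Subgraph) (hT : T.IsKEdgeTree k) :
    ∃ v, ι v ∈ T.verts := by
  classical
  obtain ⟨hinj, P, hpath, hlen, hsymm, hbr, hcov, hdis, hedge⟩ := hsub
  obtain ⟨hT, he⟩ := hT
  by_contra! hno
  have hcard : T.verts.ncard = k + 1 := by
    have := ((isTree_iff_connected_and_card).1 hT).2
    rw [aux_coe_edges, he, Nat.card_coe_set_eq] at this
    exact this.symm
  obtain ⟨⟨x, hx⟩⟩ := hT.isConnected.nonempty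
  have hnr : ∀ z ∈ T.verts, z ∉ Set.range ι := by
    rintro z hz ⟨v, rfl⟩; exact hno v hz
  obtain hxr | ⟨u, v, h, hxP⟩ := hcov x
  · exact hnr x hx hxr
  have step : ∀ a b, T.Adj a b → a ∈ (P h).support → b ∈ (P h).support := by
    intro a b hab ha
    obtain ⟨u', v', h', hm⟩ := (hedge s(a, b)).1 hab.adj_sub
    have ha' := Walk.fst_mem_support_of_mem_edges _ hm
    have hb' := Walk.snd_mem_support_of_mem_edges _ hm
    by_cases hE : s(u, v) = s(u', v')
    · rw [Sym2.eq_iff] at hE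
      rcases hE with ⟨rfl, rfl⟩ | ⟨rfl, rfl⟩
      · exact hb'
      · have := hsymm h
        rw [show P h' = (P h).reverse from this] at hb'
        simpa using hb'
    · exact absurd (hdis h h' hE a ha ha') (hnr a hab.fst_mem)
  have all : ∀ y : T.verts, (y : V') ∈ (P h).support := by
    intro y
    obtain ⟨w⟩ := hT.isConnected.preconnected ⟨x, hx⟩ y
    have : ∀ (a b : T.verts) (w : T.coe.Walk a b), (a : V') ∈ (P h).support →
        (b : V') ∈ (P h).support := by
      intro a b w
      induction w with
      | nil => exact id
      | cons hab _ ih => exact fun ha => ih (step _ _ hab ha)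
    exact this _ _ w hxP
  have hsubset : T.verts ⊆ (((P h).support.toFinset.erase (ι u)).erase (ι v) : Finset V') := by
    intro y hy
    have h1 := all ⟨y, hy⟩
    have h2 := hnr y hy
    simp only [Finset.coe_erase, Set.mem_diff, Finset.mem_coe, List.mem_toFinset,
      Set.mem_singleton_iff]
    exact ⟨⟨h1, fun h => h2 ⟨u, h.symm⟩⟩, fun h => h2 ⟨v, h.symm⟩⟩
  have hle := Set.ncard_le_ncard hsubset (Set.toFinite _)
  rw [Set.ncard_coe_finset, hcard, Finset.card_erase_of_mem, Finset.card_erase_of_mem,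
    List.toFinset_card_of_nodup (hpath h).support_nodup, Walk.length_support, hlen] at hle
  · simp only at hle
    omega
  · simp
  · simp only [Finset.mem_erase, List.mem_toFinset, Walk.end_mem_support, and_true]
    exact fun hh => h.ne (hinj hh).symm

open SimpleGraph in
theorem aux_hall {V : Type} [Fintype V] (H : SimpleGraph V) [DecidableRel H.Adj]
    (hdeg : ∀ v : V, 3 ≤ H.degree v) :
    ∃ w : V → V, (∀ v, H.Adj v (w v)) ∧ Function.Injective (fun v => s(v, w v)) := by
  classical
  obtain ⟨f, hf, hm⟩ := (Finset.all_card_le_biUnion_card_iff_exists_injective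
    (fun v => H.incidenceFinset v)).1 (by
      intro A
      have := Finset.card_mul_le_card_mul (s := A) (t := A.biUnion fun v => H.incidenceFinset v)
        (fun (v : V) (e : Sym2 V) => v ∈ e) (m := 3) (n := 2) ?_ ?_
      · omega
      · intro a ha
        refine (hdeg a).trans ?_
        rw [← card_incidenceFinset_eq_degree]
        apply Finset.card_le_card
        intro e he
        rw [Finset.mem_bipartiteAbove]
        refine ⟨Finset.mem_biUnion.2 ⟨a, ha, he⟩, ?_⟩
        rw [mem_incidenceFinset] at he
        exact he.2
      · intro e he
        induction e with | _ x y =>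
        refine (Finset.card_le_card (t := {x, y}) ?_).trans Finset.card_le_two
        intro z hz
        rw [Finset.mem_bipartiteBelow] at hz
        simpa using hz.2)
  have : ∀ v, ∃ w, H.Adj v w ∧ f v = s(v, w) := by
    intro v
    have h1 := hm v
    rw [mem_incidenceFinset] at h1
    obtain ⟨w, hw⟩ := h1.2
    refine ⟨w, ?_, hw⟩
    have := h1.1
    rwa [hw] at this
  choose w hw hfw using this
  refine ⟨w, hw, ?_⟩
  have : (fun v => s(v, w v)) = f := by ext1 v; exact (hfw v).symm
  rwa [this]

open SimpleGraph in
theorem aux_family {V V' : Type} [Fintype V] (k : ℕ)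
    (H : SimpleGraph V) [DecidableRel H.Adj] (hdeg : ∀ v : V, 3 ≤ H.degree v)
    (Hk : SimpleGraph V') (ι : V → V')
    (hsub : H.IsSubdivision Hk ι (fun _ => k)) :
    ∃ P : Finset Hk.Subgraph,
    (∀ H ∈ P, H.IsKEdgePath k) ∧
    (P : Set Hk.Subgraph).Pairwise (fun H H' => Disjoint H.verts H'.verts) ∧
    P.card = Fintype.card V := by
  classical
  obtain ⟨hinj, P, hpath, hlen, hsymm, hbr, hcov, hdis, hedge⟩ := hsub
  obtain ⟨w, hw, hwi⟩ := aux_hall H hdeg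
  choose x q hq hql hqa hqs using fun v =>
    aux_tail (P (hw v).symm) k (hpath _) (hlen _)
  have hd : ∀ v v', v ≠ v' → Disjoint (q v).toSubgraph.verts (q v').toSubgraph.verts := by
    intro v v' hne
    rw [Set.disjoint_left]
    intro z hz hz'
    rw [Walk.mem_verts_toSubgraph] at hz hz'
    have hE : s(w v, v) ≠ s(w v', v') := by
      intro h
      apply hne
      apply hwi
      simp only
      rw [Sym2.eq_swap, h, Sym2.eq_swap]
    have hr := hdis (hw v).symm (hw v').symm hE z (hqs v z hz) (hqs v' z hz')
    have key : ∀ v, z ∈ (q v).support → z = ι v := by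
      intro v hz
      rcases hbr (hw v).symm z (hqs v z hz) hr with h | h
      · subst h; exact absurd hz (hqa v)
      · exact h
    exact hne (hinj ((key v hz).symm.trans (key v' hz')))
  have hi : Function.Injective (fun v => (q v).toSubgraph) := by
    intro v v' h
    by_contra hne
    have := hd v v' hne
    simp only at h
    rw [h, Set.disjoint_left] at this
    exact this (a := ι v') (by simp) (by simp)
  refine ⟨Finset.univ.image fun v => (q v).toSubgraph, ?_, ?_, ?_⟩
  · intro T hT
    simp only [Finset.mem_image, Finset.mem_univ, true_and] at hT
    obtain ⟨v, rfl⟩ := hT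
    exact ⟨_, _, q v, hq v, hql v, rfl⟩
  · intro T hT T' hT' hne
    simp only [Finset.coe_image, Finset.coe_univ, Set.image_univ, Set.mem_range] at hT hT'
    obtain ⟨v, rfl⟩ := hT
    obtain ⟨v', rfl⟩ := hT'
    exact hd v v' (fun h => hne (by rw [h]))
  · rw [Finset.card_image_of_injective _ hi, Finset.card_univ]

/-- Let `s ≥ 3` and `k ≥ 1` and let `H` be a finite simple graph in which every
vertex has degree at least 3 and at most `s`.  Let `H_k` be obtained from `H` by
subdividing every edge with exactly `k` new vertices.  Then
`λ_k(H_k) = τ_k(H_k) = v(H)`. -/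
theorem stmt_5 {V V' : Type} [Fintype V] [Fintype V'] (s k : ℕ) (hs : 3 ≤ s) (hk : 1 ≤ k)
    (H : SimpleGraph V) [DecidableRel H.Adj]
    (hdeg : ∀ v : V, 3 ≤ H.degree v ∧ H.degree v ≤ s)
    (Hk : SimpleGraph V') (ι : V → V')
    (hsub : H.IsSubdivision Hk ι (fun _ => k)) :
    Hk.lambdaK k = Hk.tauK k ∧ Hk.tauK k = Fintype.card V := by
  classical
  have hub : ∀ P : Finset Hk.Subgraph, (∀ T ∈ P, T.IsKEdgeTree k) →
      (P : Set Hk.Subgraph).Pairwise (fun H H' => Disjoint H.verts H'.verts) →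
      P.card ≤ Fintype.card V := by
    intro P hP hd
    have hb : ∀ T : P, ∃ v, ι v ∈ T.1.verts := fun T =>
      aux_tree_branch k H Hk ι hsub T.1 (hP T.1 T.2)
    choose g hg using hb
    rw [← Fintype.card_coe]
    apply Fintype.card_le_of_injective g
    intro T T' h
    by_contra hne
    have := Set.disjoint_left.1 (hd T.2 T'.2 (fun h => hne (Subtype.ext h))) (hg T)
    rw [h] at this
    exact this (hg T')
  obtain ⟨P, hP, hPd, hPc⟩ := aux_family k H (fun v => (hdeg v).1) Hk ι hsub
  have h1 : Hk.tauK k = Fintype.card V := by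
    apply le_antisymm
    · apply csSup_le'
      rintro n ⟨P, hP, hd, rfl⟩
      exact hub P hP hd
    · apply le_csSup
      · refine ⟨Fintype.card V, ?_⟩
        rintro n ⟨P, hP, hd, rfl⟩
        exact hub P hP hd
      · exact ⟨P, fun T hT => aux_path_tree T k (hP T hT), hPd, hPc⟩
  have h2 : Hk.lambdaK k = Fintype.card V := by
    apply le_antisymm
    · apply csSup_le'
      rintro n ⟨P, hP, hd, rfl⟩
      exact hub P (fun T hT => aux_path_tree T k (hP T hT)) hd
    · apply le_csSup
      · refine ⟨Fintype.card V, ?_⟩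
        rintro n ⟨P, hP, hd, rfl⟩
        exact hub P (fun T hT => aux_path_tree T k (hP T hT)) hd
      · exact ⟨P, hP, hPd, hPc⟩
  exact ⟨h2.trans h1.symm, h1⟩
end

section
/- Let G be a finite simple graph, let T be a thread of G with end-vertices x and y (possibly x = y), let T' = T − {x,y}, and let G' = G − V(T'). Suppose v(T') ∈ {3k, 3k+1} for some integer k ≥ 1. If λ(G') ≥ v(G')/4, then λ(G) ≥ v(G)/4. -/
/-- A path-thread of `G`: a maximal path in `G` such that every vertex having degree
two in the path also has degree two in `G`. -/
def SimpleGraph.IsPathThread {V : Type*} (G : SimpleGraph V) {x y : V}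
    (w : G.Walk x y) : Prop :=
  w.IsPath ∧
  (∀ v : V, (w.toSubgraph.neighborSet v).ncard = 2 → (G.neighborSet v).ncard = 2) ∧
  ∀ (x' y' : V) (w' : G.Walk x' y'), w'.IsPath →
    (∀ v : V, (w'.toSubgraph.neighborSet v).ncard = 2 → (G.neighborSet v).ncard = 2) →
    w.toSubgraph ≤ w'.toSubgraph → w.toSubgraph = w'.toSubgraph

/-- A thread of `G` with end-vertices `x` and `y` (possibly `x = y`): either a
path-thread, or (when `y = x`) a cycle-thread, i.e. a cycle all of whose vertices
except the distinguished vertex `x` have degree two in `G`. -/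
def SimpleGraph.IsThread {V : Type*} (G : SimpleGraph V) {x y : V}
    (w : G.Walk x y) : Prop :=
  G.IsPathThread w ∨
  ∃ h : y = x, (w.copy rfl h).IsCycle ∧
    ∀ v ∈ w.support, v ≠ x → (G.neighborSet v).ncard = 2

lemma aux_bdd {V : Type*} [Finite V] (G : SimpleGraph V) (k : ℕ) :
    BddAbove {n | ∃ P : Finset G.Subgraph,
    (∀ H ∈ P, H.IsKEdgePath k) ∧
    (P : Set G.Subgraph).Pairwise (fun H H' => Disjoint H.verts H'.verts) ∧
    P.card = n} := by
  classical
  haveI : Finite G.Subgraph := inferInstance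
  haveI := Fintype.ofFinite G.Subgraph
  refine ⟨Fintype.card G.Subgraph, ?_⟩
  rintro n ⟨P, -, -, rfl⟩
  exact Finset.card_le_univ P

lemma aux_le {V : Type*} [Finite V] (G : SimpleGraph V) (k : ℕ) {ι : Type*} [Fintype ι]
    (f : ι → G.Subgraph) (hf : ∀ i, (f i).IsKEdgePath k)
    (hd : ∀ i j, i ≠ j → Disjoint (f i).verts (f j).verts) :
    Fintype.card ι ≤ G.lambdaK k := by
  classical
  have hinj : Function.Injective f := by
    intro i j hij
    by_contra hne
    have h := hd i j hne
    rw [hij, disjoint_self] at h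
    obtain ⟨u, v, p, -, -, hp⟩ := hf j
    have hu : u ∈ (f j).verts := by rw [hp]; exact p.start_mem_verts_toSubgraph
    rw [h] at hu
    exact hu
  refine le_csSup (aux_bdd G k) ⟨Finset.univ.image f, ?_, ?_, ?_⟩
  · intro H hH
    obtain ⟨i, -, rfl⟩ := Finset.mem_image.mp hH
    exact hf i
  · intro H hH H' hH' hne
    obtain ⟨i, -, rfl⟩ := Finset.mem_image.mp (Finset.mem_coe.mp hH)
    obtain ⟨j, -, rfl⟩ := Finset.mem_image.mp (Finset.mem_coe.mp hH')
    exact hd i j (fun h => hne (by rw [h]))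
  · rw [Finset.card_image_of_injective _ hinj, Finset.card_univ]

lemma aux_exists {V : Type*} [Finite V] (G : SimpleGraph V) (k : ℕ) :
    ∃ P : Finset G.Subgraph,
    (∀ H ∈ P, H.IsKEdgePath k) ∧
    (P : Set G.Subgraph).Pairwise (fun H H' => Disjoint H.verts H'.verts) ∧
    P.card = G.lambdaK k := by
  exact Nat.sSup_mem (s := {n | ∃ P : Finset G.Subgraph, (∀ H ∈ P, H.IsKEdgePath k) ∧
    (P : Set G.Subgraph).Pairwise (fun H H' => Disjoint H.verts H'.verts) ∧
    P.card = n}) ⟨0, ∅, by simp, by simp, by simp⟩ (aux_bdd G k)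

lemma aux_three {V : Type*} (G : SimpleGraph V) {a b c : V} (h1 : G.Adj a b) (h2 : G.Adj b c)
    (hac : a ≠ c) : ∃ H : G.Subgraph, H.IsKEdgePath 2 ∧ H.verts = {a, b, c} := by
  refine ⟨(SimpleGraph.Walk.cons h1 (SimpleGraph.Walk.cons h2 .nil)).toSubgraph,
    ⟨_, _, _, ?_, rfl, rfl⟩, ?_⟩
  · simp [h1.ne, h2.ne, hac]
  · ext v; simp; tauto

lemma aux_inj {V : Type*} (G : SimpleGraph V) {x y : V} (w : G.Walk x y) (hw : G.IsThread w) :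
    Set.InjOn w.getVert {i | 1 ≤ i ∧ i ≤ w.length} ∧
    ∀ i, 1 ≤ i → i < w.length → w.getVert i ≠ x ∧ w.getVert i ≠ y := by
  rcases hw with ⟨hp, -⟩ | ⟨rfl, hc, -⟩
  · refine ⟨hp.getVert_injOn.mono (fun i hi => hi.2), fun i h1 h2 => ⟨fun h => ?_, fun h => ?_⟩⟩
    · have := hp.getVert_injOn (show i ≤ w.length by omega) (show 0 ≤ w.length by omega)
        (by simpa using h)
      omega
    · have := hp.getVert_injOn (show i ≤ w.length by omega) (show w.length ≤ w.length by omega)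
        (by simpa using h)
      omega
  · simp only [SimpleGraph.Walk.copy_rfl_rfl] at hc
    have key : ∀ i, 1 ≤ i → i < w.length → w.getVert i ≠ y := by
      intro i h1 h2 h
      have := hc.getVert_injOn (show 1 ≤ i ∧ i ≤ w.length by omega)
        (show 1 ≤ w.length ∧ w.length ≤ w.length by omega) (by simpa using h)
      omega
    exact ⟨hc.getVert_injOn, fun i h1 h2 => ⟨key i h1 h2, key i h1 h2⟩⟩

/-- Let `G` be a finite simple graph, `T` a thread of `G` with end-vertices `x` and
`y` (possibly `x = y`), `T' = T − {x,y}`, `G' = G − V(T')`, and suppose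
`v(T') ∈ {3k, 3k+1}` for some `k ≥ 1`.  If `λ(G') ≥ v(G')/4`, then
`λ(G) ≥ v(G)/4`. -/
theorem stmt_8 {V : Type} [Fintype V]
    (G : SimpleGraph V) {x y : V} (w : G.Walk x y) (hw : G.IsThread w)
    (S : Set V) (hS : S = {v : V | v ∈ w.support ∧ v ≠ x ∧ v ≠ y})
    (k : ℕ) (hk : 1 ≤ k) (hcard : S.ncard = 3 * k ∨ S.ncard = 3 * k + 1)
    (hG' : ((G.induce Sᶜ).lambdaK 2 : ℚ) ≥ (Sᶜ.ncard : ℚ) / 4) :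
    (G.lambdaK 2 : ℚ) ≥ (Fintype.card V : ℚ) / 4 := by
  classical
  obtain ⟨hinj, hne⟩ := aux_inj G w hw
  have hSsub : S ⊆ w.getVert '' (Finset.Ico 1 w.length : Finset ℕ) := by
    intro v hv
    rw [hS] at hv
    obtain ⟨hv1, hvx, hvy⟩ := hv
    obtain ⟨n, rfl, hn⟩ := SimpleGraph.Walk.mem_support_iff_exists_getVert.mp hv1
    refine ⟨n, ?_, rfl⟩
    have h0 : n ≠ 0 := by rintro rfl; simp at hvx
    have h1 : n ≠ w.length := by rintro rfl; simp at hvy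
    simp only [Finset.coe_Ico, Set.mem_Ico]
    omega
  have hlen : S.ncard ≤ w.length - 1 := by
    calc S.ncard ≤ (w.getVert '' (Finset.Ico 1 w.length : Finset ℕ)).ncard :=
          Set.ncard_le_ncard hSsub (Set.toFinite _)
      _ ≤ ((Finset.Ico 1 w.length : Finset ℕ) : Set ℕ).ncard :=
          Set.ncard_image_le (Finset.finite_toSet _)
      _ = w.length - 1 := by rw [Set.ncard_coe_finset, Nat.card_Ico]
  have hmemS : ∀ i, 1 ≤ i → i < w.length → w.getVert i ∈ S := by
    intro i h1 h2
    rw [hS]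
    exact ⟨w.getVert_mem_support i, hne i h1 h2⟩
  have hk3 : 3 * k + 1 ≤ w.length := by omega
  have hpaths : ∀ j : Fin k, ∃ H : G.Subgraph, H.IsKEdgePath 2 ∧
      H.verts = {w.getVert (3 * j + 1), w.getVert (3 * j + 2), w.getVert (3 * j + 3)} := by
    intro j
    have hj := j.2
    refine aux_three G (w.adj_getVert_succ (by omega)) (w.adj_getVert_succ (by omega)) ?_
    intro h
    have := hinj (show 1 ≤ 3 * (j : ℕ) + 1 ∧ 3 * (j : ℕ) + 1 ≤ w.length by omega)
      (show 1 ≤ 3 * (j : ℕ) + 3 ∧ 3 * (j : ℕ) + 3 ≤ w.length by omega) h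
    omega
  choose f hf hfv using hpaths
  have hfv' : ∀ j v, v ∈ (f j).verts → ∃ i, 3 * (j : ℕ) + 1 ≤ i ∧ i ≤ 3 * (j : ℕ) + 3 ∧
      v = w.getVert i := by
    intro j v hv
    rw [hfv] at hv
    rcases hv with rfl | rfl | rfl
    · exact ⟨_, by omega, by omega, rfl⟩
    · exact ⟨_, by omega, by omega, rfl⟩
    · exact ⟨_, by omega, by omega, rfl⟩
  have hfS : ∀ j, (f j).verts ⊆ S := by
    intro j v hv
    obtain ⟨i, h1, h2, rfl⟩ := hfv' j v hv
    have hj := j.2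
    exact hmemS i (by omega) (by omega)
  obtain ⟨P, hP, hPd, hPc⟩ := aux_exists (G.induce Sᶜ) 2
  let e : G.induce Sᶜ →g G := (SimpleGraph.Embedding.induce Sᶜ).toHom
  have he : Function.Injective e := Subtype.val_injective
  have heS : ∀ H : (G.induce Sᶜ).Subgraph, Disjoint (H.map e).verts S := by
    intro H
    rw [Set.disjoint_left]
    rintro _ ⟨a, -, rfl⟩
    exact a.2
  let g : P ⊕ Fin k → G.Subgraph := Sum.elim (fun H => H.1.map e) f
  have hle : Fintype.card (P ⊕ Fin k) ≤ G.lambdaK 2 := by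
    refine aux_le G 2 g ?_ ?_
    · rintro (H | j)
      · obtain ⟨u, v, p, hp, hl, hH⟩ := hP H.1 H.2
        refine ⟨e u, e v, p.map e, SimpleGraph.Walk.IsPath.map he hp, by simpa using hl, ?_⟩
        rw [SimpleGraph.Walk.toSubgraph_map, ← hH]
        rfl
      · exact hf j
    · rintro (H | j) (H' | j') hij
      · have := hPd H.2 H'.2 (fun h => hij (congrArg Sum.inl (Subtype.ext h)))
        exact (Set.disjoint_image_iff he).mpr this
      · exact (heS H.1).mono_right (hfS j')
      · exact ((heS H'.1).mono_right (hfS j)).symm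
      · change Disjoint (f j).verts (f j').verts
        rw [Set.disjoint_left]
        intro v hv hv'
        obtain ⟨i, h1, h2, rfl⟩ := hfv' j v hv
        obtain ⟨i', h1', h2', h⟩ := hfv' j' _ hv'
        have hj := j.2
        have hj' := j'.2
        have := hinj (show 1 ≤ i ∧ i ≤ w.length by omega)
          (show 1 ≤ i' ∧ i' ≤ w.length by omega) h
        exact hij (congrArg Sum.inr (Fin.ext (by omega)))
  rw [Fintype.card_sum, Fintype.card_coe, Fintype.card_fin, hPc] at hle
  have hc : S.ncard + Sᶜ.ncard = Fintype.card V := by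
    rw [Set.ncard_add_ncard_compl, Nat.card_eq_fintype_card]
  have hS4 : S.ncard ≤ 4 * k := by omega
  have hle' : ((G.induce Sᶜ).lambdaK 2 : ℚ) + k ≤ G.lambdaK 2 := by exact_mod_cast hle
  have hS4' : (S.ncard : ℚ) ≤ 4 * k := by exact_mod_cast hS4
  rw [← hc]
  push_cast
  linarith
end
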